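/- For s ∈ (0, 1/2), the operator D_x (−Δ)^{−s} applied to a Schwartz function u on ℝ^d has the pointwise representation D_x (−Δ)^{−s} u (x) = N(d,s) · p.v. ∫_{ℝ^d} u(x−y) · y / |y|^{d−2s+2} dy for some constant N(d,s). -/

import Mathlib

open MeasureTheory Filter Metric Set
open scoped ENNReal NNReal Topology

section RieszPotential

variable {E : Type*} [NormedAddCommGroup E] [InnerProductSpace ℝ E]

/-- A Schwartz map decays polynomially, uniformly over translates by a ball of radius one. -/
theorem SchwartzMap.exists_norm_sub_le_one_add_norm_rpow {F : Type*} [NormedAddCommGroup F]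
    [NormedSpace ℝ F] (f : SchwartzMap E F) (x : E) (n : ℕ) :
    ∃ C : ℝ, ∀ x' ∈ ball x 1, ∀ y : E, ‖f (x' - y)‖ ≤ C * (1 + ‖y‖) ^ (-(n : ℝ)) := by
  let M := 2 ^ n * ((Finset.Iic (n, 0)).sup fun m => SchwartzMap.seminorm ℝ m.1 m.2) f
  have hM : ∀ z : E, (1 + ‖z‖) ^ n * ‖f z‖ ≤ M := fun z => by
    simpa using SchwartzMap.one_add_le_sup_seminorm_apply (𝕜 := ℝ) (m := (n, 0)) (k := n) (n := 0)
      le_rfl le_rfl f z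
  refine ⟨(2 + ‖x‖) ^ n * M, fun x' hx' y => ?_⟩
  have hx : ‖x'‖ ≤ 1 + ‖x‖ := by
    have h1 : ‖x' - x‖ < 1 := by simpa [dist_eq_norm] using hx'
    have h2 := norm_sub_norm_le x' x
    linarith
  have hy : 1 + ‖y‖ ≤ (2 + ‖x‖) * (1 + ‖x' - y‖) := by
    have h1 : ‖y‖ ≤ ‖x'‖ + ‖x' - y‖ := by
      simpa using norm_sub_le x' (x' - y)
    nlinarith [norm_nonneg x, norm_nonneg (x' - y),
      mul_nonneg (norm_nonneg x) (norm_nonneg (x' - y))]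
  rw [Real.rpow_neg (by positivity), Real.rpow_natCast, ← div_eq_mul_inv,
    le_div_iff₀ (by positivity)]
  calc ‖f (x' - y)‖ * (1 + ‖y‖) ^ n
      ≤ ‖f (x' - y)‖ * ((2 + ‖x‖) * (1 + ‖x' - y‖)) ^ n := by gcongr
    _ = (2 + ‖x‖) ^ n * ((1 + ‖x' - y‖) ^ n * ‖f (x' - y)‖) := by rw [mul_pow]; ring
    _ ≤ (2 + ‖x‖) ^ n * M := by gcongr; exact hM _

theorem hasFDerivAt_norm_rpow_of_ne_zero (p : ℝ) {z : E} (hz : z ≠ 0) :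
    HasFDerivAt (fun w : E => ‖w‖ ^ p) ((p * ‖z‖ ^ (p - 2)) • innerSL ℝ z) z := by
  have h := (hasStrictFDerivAt_norm_sq z).hasFDerivAt.rpow_const (p := p / 2) (by simp [hz])
  have hpow : ∀ (w : E) (q : ℝ), (‖w‖ ^ 2) ^ q = ‖w‖ ^ (2 * q) := fun w q => by
    rw [Real.rpow_mul (norm_nonneg _), Real.rpow_two]
  simp only [hpow] at h
  convert h using 1
  · ext w; congr 1; ring
  · rw [← Nat.cast_smul_eq_nsmul ℝ, smul_smul]
    congr 1
    rw [show 2 * (p / 2 - 1) = p - 2 by ring]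
    push_cast; ring

theorem hasFDerivAt_max_norm_rpow (p : ℝ) {ε : ℝ} (hε : 0 < ε) {z : E} (hz : ‖z‖ ≠ ε) :
    HasFDerivAt (fun w : E => (max ‖w‖ ε) ^ p)
      ({w : E | ε < ‖w‖}.indicator (fun w => (p * ‖w‖ ^ (p - 2)) • innerSL ℝ w) z) z := by
  rcases lt_or_gt_of_ne hz with h | h
  · rw [indicator_of_notMem (by simpa using h.le)]
    refine (hasFDerivAt_const (ε ^ p) z).congr_of_eventuallyEq ?_
    filter_upwards [continuous_norm.continuousAt.eventually_lt_const h] with w hw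
    rw [max_eq_right hw.le]
  · rw [indicator_of_mem (by simpa using h)]
    refine (hasFDerivAt_norm_rpow_of_ne_zero p
      (norm_pos_iff.1 (hε.trans h))).congr_of_eventuallyEq ?_
    filter_upwards [continuous_norm.continuousAt.eventually_const_lt h] with w hw
    rw [max_eq_left hw.le]

theorem exists_lipschitzWith_max_norm_rpow_neg {E : Type*} [NormedAddCommGroup E] {a : ℝ}
    (ha : 0 ≤ a) {ε : ℝ} (hε : 0 < ε) :
    ∃ C : ℝ≥0, LipschitzWith C (fun w : E => (max ‖w‖ ε) ^ (-a)) := by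
  have hC : 0 ≤ a * ε ^ (-a - 1) := by positivity
  have h1 : LipschitzOnWith (a * ε ^ (-a - 1)).toNNReal (fun t : ℝ => t ^ (-a)) (Ici ε) := by
    refine (convex_Ici ε).lipschitzOnWith_of_nnnorm_hasDerivWithin_le
      (fun t ht => (Real.hasDerivAt_rpow_const
        (Or.inl (hε.trans_le ht).ne')).hasDerivWithinAt) fun t ht => ?_
    have ht0 : 0 < t := hε.trans_le ht
    rw [← NNReal.coe_le_coe, coe_nnnorm, Real.coe_toNNReal _ hC, norm_mul, norm_neg,
      Real.norm_of_nonneg ha, Real.norm_of_nonneg (by positivity)]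
    exact mul_le_mul_of_nonneg_left (Real.rpow_le_rpow_of_nonpos hε ht (by linarith)) ha
  have h2 : LipschitzWith 1 (fun w : E => max ‖w‖ ε) := lipschitzWith_one_norm.max_const ε
  refine ⟨(a * ε ^ (-a - 1)).toNNReal * 1, ?_⟩
  rw [← lipschitzOnWith_univ] at h2 ⊢
  exact h1.comp h2 fun w _ => mem_Ici.2 (le_max_right _ _)

variable [FiniteDimensional ℝ E] [MeasurableSpace E] [BorelSpace E] [Nontrivial E]
  (μ : Measure E) [μ.IsAddHaarMeasure]

/-- The Riesz kernel is locally integrable at the origin. -/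
theorem integrableOn_ball_norm_rpow_neg {a : ℝ} (ha : a < Module.finrank ℝ E) :
    IntegrableOn (fun y : E => ‖y‖ ^ (-a)) (ball 0 1) μ := by
  have h := (integrable_fun_norm_addHaar μ (E := E)
    (f := (Iio (1 : ℝ)).indicator (fun t : ℝ => t ^ (-a)))).2 ?_
  · rw [← integrable_indicator_iff measurableSet_ball]
    refine h.congr (ae_of_all _ fun y => ?_)
    by_cases hy : ‖y‖ < 1 <;> simp [indicator, hy]
  · have hd : 0 < Module.finrank ℝ E := Module.finrank_pos
    have h1 := (intervalIntegral.integrableOn_Ioo_rpow_iff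
      (s := (Module.finrank ℝ E : ℝ) - 1 - a) one_pos).2 (by linarith)
    rw [← integrable_indicator_iff measurableSet_Ioo] at h1
    rw [← integrable_indicator_iff measurableSet_Ioi]
    refine h1.congr (ae_of_all _ fun t => ?_)
    by_cases h0 : 0 < t <;> by_cases ht : t < 1 <;> simp [indicator, h0, ht]
    rw [sub_eq_add_neg, Real.rpow_add h0, ← Real.rpow_natCast, Nat.cast_pred hd]

/-- The Riesz kernel times a sufficiently decaying weight is integrable. -/
theorem integrable_norm_rpow_neg_mul_one_add_norm {a r : ℝ} (ha0 : 0 ≤ a)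
    (ha : a < Module.finrank ℝ E) (hr : Module.finrank ℝ E < r) :
    Integrable (fun y : E => ‖y‖ ^ (-a) * (1 + ‖y‖) ^ (-r)) μ := by
  have hr0 : 0 ≤ r := (Nat.cast_nonneg _).trans hr.le
  have h1 := (integrable_indicator_iff measurableSet_ball).2 (integrableOn_ball_norm_rpow_neg μ ha)
  refine (h1.add (integrable_one_add_norm hr)).mono' (by fun_prop) (ae_of_all _ fun y => ?_)
  rw [Real.norm_of_nonneg (by positivity)]
  have hw : (1 + ‖y‖) ^ (-r) ≤ 1 :=
    Real.rpow_le_one_of_one_le_of_nonpos (by linarith [norm_nonneg y]) (by linarith)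
  have hw0 : 0 ≤ (1 + ‖y‖) ^ (-r) := by positivity
  have hk0 : 0 ≤ ‖y‖ ^ (-a) := by positivity
  by_cases hy : ‖y‖ < 1
  · simp only [Pi.add_apply, indicator, mem_ball_zero_iff, hy, if_true]
    nlinarith
  · simp only [Pi.add_apply, indicator, mem_ball_zero_iff, hy, if_false]
    have : ‖y‖ ^ (-a) ≤ 1 :=
      Real.rpow_le_one_of_one_le_of_nonpos (not_lt.1 hy) (by linarith)
    nlinarith

/-- A convolution of a Schwartz map with a kernel dominated by the Riesz kernel may be
differentiated by differentiating the Schwartz map. -/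
theorem SchwartzMap.hasFDerivAt_integral_sub_mul (u : SchwartzMap E ℝ) {a : ℝ} (ha0 : 0 ≤ a)
    (ha : a < Module.finrank ℝ E) {K : E → ℝ} (hKm : AEStronglyMeasurable K μ)
    (hK : ∀ᵐ y ∂μ, ‖K y‖ ≤ ‖y‖ ^ (-a)) (x : E) :
    HasFDerivAt (fun x' => ∫ y, u (x' - y) * K y ∂μ) (∫ y, K y • fderiv ℝ u (x - y) ∂μ) x := by
  obtain ⟨C, hC⟩ := u.exists_norm_sub_le_one_add_norm_rpow x (Module.finrank ℝ E + 1)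
  obtain ⟨C', hC'⟩ := (SchwartzMap.fderivCLM ℝ E ℝ u).exists_norm_sub_le_one_add_norm_rpow x
    (Module.finrank ℝ E + 1)
  have hint := integrable_norm_rpow_neg_mul_one_add_norm μ ha0 ha
    (r := ((Module.finrank ℝ E + 1 : ℕ) : ℝ)) (by push_cast; linarith)
  have hsub : ∀ x' : E, Continuous fun y : E => x' - y := fun x' => by fun_prop
  have hcu : ∀ x' : E, AEStronglyMeasurable (fun y => u (x' - y)) μ := fun x' =>
    (u.continuous.comp (hsub x')).aestronglyMeasurable
  refine hasFDerivAt_integral_of_dominated_of_fderiv_le (F := fun x' y => u (x' - y) * K y)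
    (F' := fun x' y => K y • fderiv ℝ u (x' - y)) (s := ball x 1)
    (bound := fun y => C' * (‖y‖ ^ (-a) * (1 + ‖y‖) ^ (-((Module.finrank ℝ E + 1 : ℕ) : ℝ))))
    (ball_mem_nhds x one_pos) (Eventually.of_forall fun x' => (hcu x').mul hKm) ?_ ?_ ?_
    (hint.const_mul _) ?_
  · refine (hint.const_mul C).mono' ((hcu x).mul hKm) ?_
    filter_upwards [hK] with y hy
    rw [norm_mul]
    calc ‖u (x - y)‖ * ‖K y‖
        ≤ (C * (1 + ‖y‖) ^ (-((Module.finrank ℝ E + 1 : ℕ) : ℝ))) * ‖y‖ ^ (-a) :=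
          mul_le_mul (hC x (mem_ball_self one_pos) y) hy (norm_nonneg _)
            ((norm_nonneg _).trans (hC x (mem_ball_self one_pos) y))
      _ = _ := by ring
  · exact hKm.smul (((SchwartzMap.fderivCLM ℝ E ℝ u).continuous.comp (hsub x)).aestronglyMeasurable)
  · filter_upwards [hK] with y hy x' hx'
    rw [norm_smul]
    have h := hC' x' hx' y
    rw [SchwartzMap.fderivCLM_apply] at h
    calc ‖K y‖ * ‖fderiv ℝ u (x' - y)‖
        ≤ ‖y‖ ^ (-a) * (C' * (1 + ‖y‖) ^ (-((Module.finrank ℝ E + 1 : ℕ) : ℝ))) :=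
          mul_le_mul hy h (norm_nonneg _) (by positivity)
      _ = _ := by ring
  · refine ae_of_all _ fun y x' _ => ?_
    have h := (u.differentiableAt (x := x' - y)).hasFDerivAt.comp x'
      ((hasFDerivAt_id x').sub_const y)
    exact h.mul_const (K y)

/-- Convolutions of the derivative of a Schwartz map with the truncations of the Riesz kernel
converge to the convolution with the Riesz kernel itself. -/
theorem SchwartzMap.tendsto_integral_max_rpow_smul_fderiv (u : SchwartzMap E ℝ) {a : ℝ}
    (ha0 : 0 ≤ a) (ha : a < Module.finrank ℝ E) (x : E) :
    Tendsto (fun ε : ℝ => ∫ y, (max ‖y‖ ε) ^ (-a) • fderiv ℝ u (x - y) ∂μ) (𝓝[>] 0)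
      (𝓝 (∫ y, ‖y‖ ^ (-a) • fderiv ℝ u (x - y) ∂μ)) := by
  obtain ⟨C, hC⟩ := (SchwartzMap.fderivCLM ℝ E ℝ u).exists_norm_sub_le_one_add_norm_rpow x
    (Module.finrank ℝ E + 1)
  have hint := integrable_norm_rpow_neg_mul_one_add_norm μ ha0 ha
    (r := ((Module.finrank ℝ E + 1 : ℕ) : ℝ)) (by push_cast; linarith)
  have hne : ∀ᵐ y : E ∂μ, y ≠ 0 := by simp [ae_iff]
  refine tendsto_integral_filter_of_dominated_convergence _ ?_ ?_ (hint.const_mul C) ?_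
  · refine Eventually.of_forall fun ε => AEStronglyMeasurable.smul
      (f := fun y : E => (max ‖y‖ ε) ^ (-a))
      (Measurable.aestronglyMeasurable (by fun_prop)) ?_
    exact ((SchwartzMap.fderivCLM ℝ E ℝ u).continuous.comp
      (by fun_prop : Continuous fun y : E => x - y)).aestronglyMeasurable
  · refine Eventually.of_forall fun ε => ?_
    filter_upwards [hne] with y hy
    have hy0 : 0 < ‖y‖ := norm_pos_iff.2 hy
    have h := hC x (mem_ball_self one_pos) y
    rw [SchwartzMap.fderivCLM_apply] at h
    rw [norm_smul, Real.norm_of_nonneg (Real.rpow_nonneg (hy0.le.trans (le_max_left _ _)) _)]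
    calc (max ‖y‖ ε) ^ (-a) * ‖fderiv ℝ u (x - y)‖
        ≤ ‖y‖ ^ (-a) * (C * (1 + ‖y‖) ^ (-((Module.finrank ℝ E + 1 : ℕ) : ℝ))) :=
          mul_le_mul (Real.rpow_le_rpow_of_nonpos hy0 (le_max_left _ _) (by linarith)) h
            (norm_nonneg _) (by positivity)
      _ = _ := by ring
  · filter_upwards [hne] with y hy
    refine tendsto_const_nhds.congr' ?_
    filter_upwards [mem_nhdsWithin_of_mem_nhds (Iio_mem_nhds (norm_pos_iff.2 hy))] with ε hε
    rw [max_eq_left (le_of_lt hε)]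

/-- A convolution of a Schwartz map with the truncated Riesz kernel may be differentiated by
differentiating the kernel. -/
theorem SchwartzMap.hasFDerivAt_integral_sub_mul_max_norm_rpow (u : SchwartzMap E ℝ) {a : ℝ}
    (ha : 0 ≤ a) {ε : ℝ} (hε : 0 < ε) (x : E) :
    HasFDerivAt (fun x' => ∫ y, u (x' - y) * (max ‖y‖ ε) ^ (-a) ∂μ)
      (∫ y, u (x - y) •
        {w : E | ε < ‖w‖}.indicator (fun w => (-a * ‖w‖ ^ (-a - 2)) • innerSL ℝ w) y ∂μ) x := by
  obtain ⟨C, hC⟩ := exists_lipschitzWith_max_norm_rpow_neg (E := E) ha hε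
  have hflip : ∀ x' : E, ∫ y, u (x' - y) * (max ‖y‖ ε) ^ (-a) ∂μ
      = ∫ y, u y * (max ‖x' - y‖ ε) ^ (-a) ∂μ := fun x' => by
    rw [← integral_sub_left_eq_self _ μ x']
    simp
  have hflip' : ∫ y, u (x - y) •
        {w : E | ε < ‖w‖}.indicator (fun w => (-a * ‖w‖ ^ (-a - 2)) • innerSL ℝ w) y ∂μ
      = ∫ y, u y •
        {w : E | ε < ‖w‖}.indicator (fun w => (-a * ‖w‖ ^ (-a - 2)) • innerSL ℝ w) (x - y) ∂μ := by
    rw [← integral_sub_left_eq_self _ μ x]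
    simp
  simp only [hflip]
  rw [hflip']
  have hmeas : ∀ x' : E, AEStronglyMeasurable (fun y => u y * (max ‖x' - y‖ ε) ^ (-a)) μ :=
    fun x' => u.continuous.aestronglyMeasurable.mul
      (hC.continuous.comp (by fun_prop : Continuous fun y : E => x' - y)).aestronglyMeasurable
  refine (hasFDerivAt_integral_of_dominated_loc_of_lip (s := univ)
    (F := fun x' y => u y * (max ‖x' - y‖ ε) ^ (-a)) (bound := fun y => u y * C)
    univ_mem (Eventually.of_forall hmeas) ?_ ?_ ?_ (u.integrable.mul_const _) ?_).2
  · refine (u.integrable.norm.mul_const (ε ^ (-a))).mono' (hmeas x) (ae_of_all _ fun y => ?_)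
    have h0 : 0 < max ‖x - y‖ ε := hε.trans_le (le_max_right _ _)
    rw [norm_mul, Real.norm_of_nonneg (Real.rpow_nonneg h0.le (-a))]
    exact mul_le_mul_of_nonneg_left
      (Real.rpow_le_rpow_of_nonpos hε (le_max_right _ _) (by linarith)) (norm_nonneg _)
  · refine u.continuous.aestronglyMeasurable.smul (Measurable.aestronglyMeasurable ?_)
    have h : Measurable ({w : E | ε < ‖w‖}.indicator
        (fun w : E => (-a * ‖w‖ ^ (-a - 2)) • innerSL ℝ w)) :=
      Measurable.indicator (Measurable.smul (f := fun w : E => -a * ‖w‖ ^ (-a - 2)) (by fun_prop)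
        (innerSL ℝ).continuous.measurable)
        (measurableSet_lt measurable_const measurable_norm)
    exact h.comp (measurable_const.sub measurable_id)
  · refine ae_of_all _ fun y => LipschitzWith.lipschitzOnWith ?_
    refine LipschitzWith.of_dist_le_mul fun v w => ?_
    have h := hC.dist_le_mul (v - y) (w - y)
    rw [dist_sub_right] at h
    simp only [Real.dist_eq] at h ⊢
    rw [← mul_sub, abs_mul]
    calc _ ≤ |u y| * (C * dist v w) := by gcongr
      _ = _ := by simp [mul_assoc]
  · have hsph : ∀ᵐ y ∂μ, y ∉ sphere x ε :=
      measure_eq_zero_iff_ae_notMem.1 (Measure.addHaar_sphere μ x ε)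
    filter_upwards [hsph] with y hy
    have hy' : ‖x - y‖ ≠ ε := fun h => hy (by rw [mem_sphere, dist_comm, dist_eq_norm, h])
    have h := (hasFDerivAt_max_norm_rpow (-a) hε hy').comp x ((hasFDerivAt_id x).sub_const y)
    exact h.const_mul (u y)

/-- Integration by parts against the truncated Riesz kernel. -/
theorem SchwartzMap.toDual_setIntegral_norm_rpow_smul (u : SchwartzMap E ℝ) {a : ℝ} (ha0 : 0 ≤ a)
    (ha : a < Module.finrank ℝ E) {ε : ℝ} (hε : 0 < ε) (x : E) :
    InnerProductSpace.toDual ℝ E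
        (-a • ∫ y in {y : E | ε < ‖y‖}, (u (x - y) * ‖y‖ ^ (-(a + 2))) • y ∂μ)
      = ∫ y, (max ‖y‖ ε) ^ (-a) • fderiv ℝ u (x - y) ∂μ := by
  have hK : ∀ᵐ y : E ∂μ, ‖(max ‖y‖ ε) ^ (-a)‖ ≤ ‖y‖ ^ (-a) := by
    have hne : ∀ᵐ y : E ∂μ, y ≠ 0 := by simp [ae_iff]
    filter_upwards [hne] with y hy
    rw [Real.norm_of_nonneg (Real.rpow_nonneg (hε.le.trans (le_max_right _ _)) _)]
    exact Real.rpow_le_rpow_of_nonpos (norm_pos_iff.2 hy) (le_max_left _ _) (by linarith)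
  have h := (u.hasFDerivAt_integral_sub_mul μ ha0 ha (K := fun y => (max ‖y‖ ε) ^ (-a))
    (Measurable.aestronglyMeasurable (by fun_prop)) hK x).unique
    (u.hasFDerivAt_integral_sub_mul_max_norm_rpow μ ha0 hε x)
  rw [h, ← integral_smul, ← integral_indicator (measurableSet_lt measurable_const measurable_norm)]
  let T : E ≃L[ℝ] StrongDual ℝ E := (InnerProductSpace.toDual ℝ E).toContinuousLinearEquiv
  refine (T.integral_comp_comm _).symm.trans (integral_congr_ae (ae_of_all _ fun y => ?_))
  by_cases hy : ε < ‖y‖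
  · simp only [indicator, mem_ofPred_eq, hy, if_true]
    ext v
    simp [T, show -2 + -a = -a - 2 by ring]
    ring
  · simp [indicator, hy]

end RieszPotential

/-- For `s ∈ (0, 1/2)`, the gradient in `x` of the Riesz potential `(−Δ)^{−s} u`
(defined via the standard representation `∫ u(x−y)|y|^{2s−d} dy`, constants absorbed)
of a Schwartz function `u` has the principal value representation
`D_x (−Δ)^{−s} u (x) = N(d,s) · p.v. ∫ u(x−y) y/|y|^{d−2s+2} dy`. -/
theorem stmt0 (d : ℕ) (hd : 0 < d) (s : ℝ) (hs : s ∈ Set.Ioo (0 : ℝ) (1/2)) :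
    ∃ N : ℝ, ∀ (u : SchwartzMap (EuclideanSpace ℝ (Fin d)) ℝ)
      (x : EuclideanSpace ℝ (Fin d)),
      ∃ L : EuclideanSpace ℝ (Fin d),
        Tendsto
          (fun ε : ℝ => ∫ y in {y : EuclideanSpace ℝ (Fin d) | ε < ‖y‖},
            (u (x - y) * ‖y‖ ^ (-((d : ℝ) - 2*s + 2))) • y)
          (𝓝[>] (0 : ℝ)) (𝓝 L) ∧
        gradient (fun x' : EuclideanSpace ℝ (Fin d) =>
          ∫ y : EuclideanSpace ℝ (Fin d), u (x' - y) * ‖y‖ ^ (2*s - (d : ℝ))) x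
          = N • L := by
  have : Nonempty (Fin d) := ⟨⟨0, hd⟩⟩
  have hd1 : (1 : ℝ) ≤ d := by exact_mod_cast hd
  obtain ⟨hs0, hs1⟩ := hs
  have ha0 : 0 < (d : ℝ) - 2 * s := by linarith
  have ha : (d : ℝ) - 2 * s < Module.finrank ℝ (EuclideanSpace ℝ (Fin d)) := by
    rw [finrank_euclideanSpace_fin]; linarith
  refine ⟨-((d : ℝ) - 2 * s), fun u x => ?_⟩
  let T := InnerProductSpace.toDual ℝ (EuclideanSpace ℝ (Fin d))
  let G := ∫ y, ‖y‖ ^ (-((d : ℝ) - 2 * s)) • fderiv ℝ u (x - y)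
  refine ⟨(-((d : ℝ) - 2 * s))⁻¹ • T.symm G, ?_, ?_⟩
  · have h := (T.symm.continuous.tendsto G).comp
      (u.tendsto_integral_max_rpow_smul_fderiv volume ha0.le ha x)
    refine (h.const_smul (-((d : ℝ) - 2 * s))⁻¹).congr' ?_
    filter_upwards [self_mem_nhdsWithin] with ε hε
    rw [Function.comp_apply, ← u.toDual_setIntegral_norm_rpow_smul volume ha0.le ha hε x,
      LinearIsometryEquiv.symm_apply_apply, inv_smul_smul₀ (neg_ne_zero.2 ha0.ne')]
  · rw [smul_inv_smul₀ (neg_ne_zero.2 ha0.ne')]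
    have h := u.hasFDerivAt_integral_sub_mul volume ha0.le ha
      (K := fun y => ‖y‖ ^ (-((d : ℝ) - 2 * s)))
      (Measurable.aestronglyMeasurable (by fun_prop))
      (ae_of_all _ fun y => (Real.norm_of_nonneg (by positivity)).le) x
    rw [neg_sub] at h
    have hG : G = ∫ y, ‖y‖ ^ (2 * s - (d : ℝ)) • fderiv ℝ u (x - y) := by simp only [G, neg_sub]
    rw [← hG] at h
    refine HasGradientAt.gradient ?_
    rw [hasGradientAt_iff_hasFDerivAt]
    simpa [T] using h
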